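/- The centre of T(v) is exactly the K-subalgebra of T(v) generated by a^p, b^p and h^p − h. -/

import Mathlib

/-!
`T(v)` is spanned by the products `w i * h ^ j`, where `w i` is `a ^ i` for `i ≥ 0` and `b ^ (-i)`
for `i < 0`, because this span contains `1` and is stable under left multiplication by the
generators (`normalForm_surjective`). These products are linearly independent
(`coeff_eq_zero`): `T(v)` acts on formal sums `∑ i, a ^ i * g i (h)` over all integers `i`, with
`b` acting as `v(h) * a⁻¹`, and applying an element to the formal sum `1` recovers its
coefficients up to nonzero factors.

Let `z = ∑ i, w i * f i (h)` be central. Since `h * w i = w i * (h + i)`, commuting with `h` forces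
`i * f i = 0`, so only degrees divisible by `p` occur (`dvd_of_central`). For those, `w i` is a
power of `a ^ p` or `b ^ p`, hence central, and commuting with `a` forces `f i (X + 1) = f i (X)`
(`invariant_of_central`). Such a polynomial is a polynomial in `X ^ p - X`
(`mem_adjoin_of_invariant`), so `z` lies in the subalgebra generated by `a ^ p`, `b ^ p` and
`h ^ p - h`. Conversely, these three elements commute with `a`, `b` and `h`
(`adjoin_le_center`).
-/

/-!
The algebra `T(v)` of Hodges: the quotient of the free algebra `K⟨a,b,h⟩` by the two-sided
ideal generated by `ha − ah − a`, `hb − bh + b`, `ba − v(h)`, `ab − v(h−1)`.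
We realise it as a `RingQuot` of the free algebra on three generators
(`0 ↦ a`, `1 ↦ b`, `2 ↦ h`).
-/

open Polynomial

noncomputable section

/-- the generator `a` of the free algebra `K⟨a,b,h⟩` -/
def fa (K : Type) [Field K] : FreeAlgebra K (Fin 3) := FreeAlgebra.ι K 0

/-- the generator `b` of the free algebra `K⟨a,b,h⟩` -/
def fb (K : Type) [Field K] : FreeAlgebra K (Fin 3) := FreeAlgebra.ι K 1

/-- the generator `h` of the free algebra `K⟨a,b,h⟩` -/
def fh (K : Type) [Field K] : FreeAlgebra K (Fin 3) := FreeAlgebra.ι K 2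

/-- The defining relations of `T(v)`. -/
inductive TvRel (K : Type) [Field K] (v : K[X]) :
    FreeAlgebra K (Fin 3) → FreeAlgebra K (Fin 3) → Prop
  | ha : TvRel K v (fh K * fa K) (fa K * (fh K + 1))
  | hb : TvRel K v (fh K * fb K) (fb K * (fh K - 1))
  | ba : TvRel K v (fb K * fa K) (aeval (fh K) v)
  | ab : TvRel K v (fa K * fb K) (aeval (fh K - 1) v)

/-- Hodges' algebra `T(v)`. -/
abbrev Tv (K : Type) [Field K] (v : K[X]) := RingQuot (TvRel K v)

/-- the image of `a` in `T(v)` -/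
def Ta (K : Type) [Field K] (v : K[X]) : Tv K v := RingQuot.mkAlgHom K (TvRel K v) (fa K)

/-- the image of `b` in `T(v)` -/
def Tb (K : Type) [Field K] (v : K[X]) : Tv K v := RingQuot.mkAlgHom K (TvRel K v) (fb K)

/-- the image of `h` in `T(v)` -/
def Th (K : Type) [Field K] (v : K[X]) : Tv K v := RingQuot.mkAlgHom K (TvRel K v) (fh K)

section Proof

variable {K : Type} [Field K] (v : K[X])

/-! ### Commutation rules in `T(v)` -/

lemma Th_mul_Ta : Th K v * Ta K v = Ta K v * (Th K v + 1) := by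
  simpa [Th, Ta] using RingQuot.mkAlgHom_rel K (TvRel.ha (K := K) (v := v))

lemma Th_mul_Tb : Th K v * Tb K v = Tb K v * (Th K v - 1) := by
  simpa [Th, Tb] using RingQuot.mkAlgHom_rel K (TvRel.hb (K := K) (v := v))

lemma Tb_mul_Ta : Tb K v * Ta K v = aeval (Th K v) v := by
  have := RingQuot.mkAlgHom_rel K (TvRel.ba (K := K) (v := v))
  rw [map_mul, ← aeval_algHom_apply] at this
  exact this

lemma Ta_mul_Tb : Ta K v * Tb K v = aeval (Th K v) (v.comp (X + C (-1))) := by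
  have := RingQuot.mkAlgHom_rel K (TvRel.ab (K := K) (v := v))
  rw [map_mul, ← aeval_algHom_apply, map_sub, map_one] at this
  rw [aeval_comp]
  simpa [Ta, Tb, Th, sub_eq_add_neg] using this

/-- An element that shifts `h` by the scalar `c` substitutes `h + c` for `h` in every polynomial
it passes. -/
lemma aeval_mul_of_shift {A : Type} [Ring A] [Algebra K A] {h x : A} {c : K}
    (hx : h * x = x * (h + algebraMap K A c)) (f : K[X]) :
    aeval h f * x = x * aeval h (f.comp (X + C c)) := by
  have hs : aeval h (X + C c) = h + algebraMap K A c := by simp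
  rw [aeval_comp, hs]
  induction f using Polynomial.induction_on' with
  | add f g hf hg => simp [add_mul, mul_add, hf, hg]
  | monomial n r =>
    have hpow : SemiconjBy x ((h + algebraMap K A c) ^ n) (h ^ n) :=
      SemiconjBy.pow_right (show SemiconjBy x _ _ from hx.symm) n
    rw [aeval_monomial, aeval_monomial, mul_assoc, ← hpow.eq, ← mul_assoc, ← mul_assoc,
      Algebra.commutes]

lemma shift_pow {A : Type} [Ring A] [Algebra K A] {h x : A} {c : K}
    (hx : h * x = x * (h + algebraMap K A c)) (n : ℕ) :
    h * x ^ n = x ^ n * (h + algebraMap K A (n * c)) := by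
  induction n with
  | zero => simp
  | succ n ih =>
    rw [pow_succ, ← mul_assoc, ih, mul_assoc, add_mul, hx, Algebra.commutes, ← mul_add, mul_assoc,
      add_assoc, ← map_add]
    congr 4
    push_cast
    ring

lemma Ta_shift : Th K v * Ta K v = Ta K v * (Th K v + algebraMap K _ 1) := by
  rw [map_one, Th_mul_Ta]

lemma Tb_shift : Th K v * Tb K v = Tb K v * (Th K v + algebraMap K _ (-1)) := by
  rw [map_neg, map_one, Th_mul_Tb, sub_eq_add_neg]

/-- The homogeneous generator of degree `i` of `T(v)`: `a ^ i` for `i ≥ 0`, `b ^ (-i)` for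
`i < 0`. -/
def homGen : ℤ → Tv K v
  | Int.ofNat n => Ta K v ^ n
  | Int.negSucc n => Tb K v ^ (n + 1)

lemma homGen_shift (i : ℤ) :
    Th K v * homGen v i = homGen v i * (Th K v + algebraMap K _ (i : K)) := by
  cases i with
  | ofNat n => simpa [homGen] using shift_pow (Ta_shift v) n
  | negSucc n =>
    have := shift_pow (Tb_shift v) (n + 1)
    rw [homGen, this]
    congr 3
    push_cast
    ring

lemma comp_shift (f : K[X]) (c d : K) :
    (f.comp (X + C c)).comp (X + C d) = f.comp (X + C (c + d)) := by
  rw [comp_assoc]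
  congr 1
  simp only [add_comp, X_comp, C_comp, C_add]
  ring

lemma Ta_mul_homGen (i : ℤ) :
    ∃ q : K[X], Ta K v * homGen v i = homGen v (i + 1) * aeval (Th K v) q := by
  cases i with
  | ofNat n =>
    refine ⟨1, ?_⟩
    change Ta K v * Ta K v ^ n = Ta K v ^ (n + 1) * _
    rw [map_one, mul_one, pow_succ']
  | negSucc n =>
    have e : homGen v (Int.negSucc n + 1) = Tb K v ^ n := by
      cases n with
      | zero => simp [homGen]
      | succ n => rfl
    rw [e]
    change ∃ q, Ta K v * Tb K v ^ (n + 1) = _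
    rw [pow_succ', ← mul_assoc, Ta_mul_Tb, aeval_mul_of_shift (shift_pow (Tb_shift v) n)]
    exact ⟨_, rfl⟩

lemma Tb_mul_homGen (i : ℤ) :
    ∃ q : K[X], Tb K v * homGen v i = homGen v (i - 1) * aeval (Th K v) q := by
  cases i with
  | ofNat n =>
    cases n with
    | zero =>
      refine ⟨1, ?_⟩
      change Tb K v * Ta K v ^ 0 = Tb K v ^ 1 * _
      simp
    | succ n =>
      have e : homGen v (Int.ofNat (n + 1) - 1) = Ta K v ^ n := by
        rw [show Int.ofNat (n + 1) - 1 = Int.ofNat n by simp]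
        rfl
      rw [e]
      change ∃ q, Tb K v * Ta K v ^ (n + 1) = _
      rw [pow_succ', ← mul_assoc, Tb_mul_Ta, aeval_mul_of_shift (shift_pow (Ta_shift v) n)]
      exact ⟨_, rfl⟩
  | negSucc n =>
    refine ⟨1, ?_⟩
    rw [show Int.negSucc n - 1 = Int.negSucc (n + 1) from rfl, map_one, mul_one, homGen, homGen,
      ← pow_succ']

/-! ### The monomials `homGen i * h ^ j` span `T(v)` -/

/-- The sum `∑ i, homGen i * f i (h)` attached to a finitely supported family of polynomials. -/
def normalForm : (ℤ →₀ K[X]) →ₗ[K] Tv K v :=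
  Finsupp.lsum K fun i => (LinearMap.mulLeft K (homGen v i)).comp (aeval (Th K v)).toLinearMap

lemma normalForm_apply (f : ℤ →₀ K[X]) :
    normalForm v f = ∑ i ∈ f.support, homGen v i * aeval (Th K v) (f i) := by
  simp [normalForm, Finsupp.sum]

lemma normalForm_single (i : ℤ) (g : K[X]) :
    normalForm v (Finsupp.single i g) = homGen v i * aeval (Th K v) g := by
  simp [normalForm]

lemma mul_normalForm_mem {x : Tv K v}
    (hx : ∀ i, ∃ j, ∃ q : K[X], x * homGen v i = homGen v j * aeval (Th K v) q)
    {t : Tv K v} (ht : t ∈ LinearMap.range (normalForm v)) :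
    x * t ∈ LinearMap.range (normalForm v) := by
  obtain ⟨f, rfl⟩ := ht
  induction f using Finsupp.induction_linear with
  | zero => simp
  | add f g hf hg =>
    rw [map_add, mul_add]
    exact add_mem hf hg
  | single i g =>
    obtain ⟨j, q, hq⟩ := hx i
    refine ⟨Finsupp.single j (q * g), ?_⟩
    rw [normalForm_single, normalForm_single, ← mul_assoc, hq, map_mul, mul_assoc]

/-- Every element of `T(v)` has a normal form: the range contains `1` and is stable under left
multiplication by the generators. -/
lemma normalForm_surjective (t : Tv K v) : ∃ f, normalForm v f = t := by
  suffices H : ∀ s ∈ LinearMap.range (normalForm v), t * s ∈ LinearMap.range (normalForm v) by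
    have h1 : (1 : Tv K v) ∈ LinearMap.range (normalForm v) :=
      ⟨Finsupp.single 0 1, by
        rw [normalForm_single, show (0 : ℤ) = Int.ofNat 0 from rfl]
        simp only [homGen, pow_zero, map_one, mul_one]⟩
    simpa using H 1 h1
  obtain ⟨x, rfl⟩ := RingQuot.mkAlgHom_surjective K (TvRel K v) t
  induction x using FreeAlgebra.induction with
  | grade0 r =>
    intro s hs
    rw [AlgHom.commutes, ← Algebra.smul_def]
    exact Submodule.smul_mem _ r hs
  | grade1 x =>
    intro s hs
    refine mul_normalForm_mem v (fun i => ?_) hs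
    fin_cases x
    · exact ⟨_, Ta_mul_homGen v i⟩
    · exact ⟨_, Tb_mul_homGen v i⟩
    · refine ⟨i, X + C (i : K), ?_⟩
      rw [map_add, aeval_X, aeval_C]
      exact homGen_shift v i
  | mul x y hx hy =>
    intro s hs
    rw [map_mul, mul_assoc]
    exact hx _ (hy _ hs)
  | add x y hx hy =>
    intro s hs
    rw [map_add, add_mul]
    exact add_mem (hx _ hs) (hy _ hs)

/-! ### A representation showing that normal forms are unique -/

/-- The action of `a` on families `g`, thought of as formal sums `∑ i, a ^ i * g i (h)` over all
integers `i`: it shifts the index by one. -/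
def opA (K : Type) [Field K] : Module.End K (ℤ → K[X]) where
  toFun g i := g (i - 1)
  map_add' _ _ := rfl
  map_smul' _ _ := rfl

/-- The action of `h` on formal sums `∑ i, a ^ i * g i (h)`. -/
def opH (K : Type) [Field K] : Module.End K (ℤ → K[X]) where
  toFun g i := (X + C (i : K)) * g i
  map_add' _ _ := by ext1 i; simp [mul_add]
  map_smul' _ _ := by ext1 i; simp

/-- The action of `b`, that is of `v(h) * a⁻¹`, on formal sums `∑ i, a ^ i * g i (h)`. -/
def opB : Module.End K (ℤ → K[X]) where
  toFun g i := v.comp (X + C (i : K)) * g (i + 1)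
  map_add' _ _ := by ext1 i; simp [mul_add]
  map_smul' _ _ := by ext1 i; simp

lemma aeval_opH (f : K[X]) (g : ℤ → K[X]) (k : ℤ) :
    aeval (opH K) f g k = f.comp (X + C (k : K)) * g k := by
  induction f using Polynomial.induction_on' generalizing g with
  | add f₁ f₂ h₁ h₂ => simp [h₁, h₂, add_mul]
  | monomial n r =>
    have hpow : (opH K ^ n) g k = (X + C (k : K)) ^ n * g k := by
      induction n generalizing g with
      | zero => simp
      | succ n ih =>
        rw [pow_succ, Module.End.mul_apply, ih, pow_succ, mul_assoc]
        rfl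
    rw [aeval_monomial, Module.End.mul_apply, Module.algebraMap_end_apply, Pi.smul_apply, hpow,
      monomial_comp, smul_eq_C_mul, mul_assoc]

/-- The representation of `T(v)` on formal sums `∑ i, a ^ i * g i (h)`, in which `b` acts as
`v(h) * a⁻¹`. -/
def tvRep : Tv K v →ₐ[K] Module.End K (ℤ → K[X]) :=
  RingQuot.liftAlgHom K ⟨FreeAlgebra.lift K ![opA K, opB v, opH K], by
    intro x y hxy
    cases hxy with
    | ha =>
      ext1 g
      ext1 i
      simp only [fh, fa, map_mul, map_add, map_one, FreeAlgebra.lift_ι_apply, Matrix.cons_val]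
      change (X + C (i : K)) * g (i - 1) =
        (X + C ((i - 1 : ℤ) : K)) * g (i - 1) + g (i - 1)
      push_cast
      rw [C_sub, C_1]
      ring
    | hb =>
      ext1 g
      ext1 i
      simp only [fh, fb, map_mul, map_sub, map_one, FreeAlgebra.lift_ι_apply, Matrix.cons_val]
      change (X + C (i : K)) * (v.comp (X + C (i : K)) * g (i + 1)) =
        v.comp (X + C (i : K)) * ((X + C ((i + 1 : ℤ) : K)) * g (i + 1) - g (i + 1))
      push_cast
      rw [C_add, C_1]
      ring
    | ba =>
      ext1 g
      ext1 i
      rw [← aeval_algHom_apply]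
      simp only [fh, fa, fb, map_mul, FreeAlgebra.lift_ι_apply, Matrix.cons_val]
      rw [aeval_opH]
      change v.comp (X + C (i : K)) * g (i + 1 - 1) = _
      rw [add_sub_cancel_right]
    | ab =>
      ext1 g
      ext1 i
      rw [← aeval_algHom_apply]
      simp only [fh, fa, fb, map_mul, map_sub, map_one, FreeAlgebra.lift_ι_apply, Matrix.cons_val]
      have e : opH K - 1 = aeval (opH K) (X + C (-1 : K)) := by simp [sub_eq_add_neg]
      rw [e, ← aeval_comp, aeval_opH, comp_shift]
      change v.comp (X + C ((i - 1 : ℤ) : K)) * g (i - 1 + 1) = _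
      rw [sub_add_cancel]
      push_cast
      rw [sub_eq_neg_add]⟩

lemma tvRep_Ta : tvRep v (Ta K v) = opA K := by
  rw [tvRep, Ta, RingQuot.liftAlgHom_mkAlgHom_apply]
  simp [fa]

lemma tvRep_Tb : tvRep v (Tb K v) = opB v := by
  rw [tvRep, Tb, RingQuot.liftAlgHom_mkAlgHom_apply]
  simp [fb]

lemma tvRep_Th : tvRep v (Th K v) = opH K := by
  rw [tvRep, Th, RingQuot.liftAlgHom_mkAlgHom_apply]
  simp [fh]

lemma comp_shift_ne_zero {f : K[X]} (hf : f ≠ 0) (c : K) : f.comp (X + C c) ≠ 0 := by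
  intro h0
  apply hf
  have := congrArg (fun q => q.comp (X + C (-c))) h0
  rw [comp_shift, add_neg_cancel, C_0, add_zero, comp_X, zero_comp] at this
  exact this

variable {v}

lemma tvRep_homGen (hv : v ≠ 0) (i : ℤ) : ∃ c : ℤ → K[X], (∀ k, c k ≠ 0) ∧
    ∀ g k, tvRep v (homGen v i) g k = c k * g (k - i) := by
  cases i with
  | ofNat n =>
    refine ⟨fun _ => 1, fun _ => one_ne_zero, fun g k => ?_⟩
    rw [homGen, map_pow, tvRep_Ta, one_mul, Int.ofNat_eq_natCast]
    induction n generalizing g with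
    | zero => simp
    | succ n ih =>
      rw [pow_succ, Module.End.mul_apply, ih]
      change g (k - n - 1) = _
      congr 1
      push_cast
      ring
  | negSucc n =>
    rw [homGen, map_pow, tvRep_Tb, Int.negSucc_eq, ← Nat.cast_add_one]
    generalize n + 1 = m
    induction m with
    | zero => exact ⟨fun _ => 1, fun _ => one_ne_zero, fun g k => by simp⟩
    | succ m ih =>
      obtain ⟨c, hc, H⟩ := ih
      refine ⟨fun k => c k * v.comp (X + C ((k + m : ℤ) : K)),
        fun k => mul_ne_zero (hc k) (comp_shift_ne_zero hv _), fun g k => ?_⟩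
      rw [pow_succ, Module.End.mul_apply, H, sub_neg_eq_add, mul_assoc]
      change c k * (v.comp (X + C ((k + m : ℤ) : K)) * g (k + m + 1)) = _
      congr 3
      push_cast
      ring

/-- Normal forms are unique: applying the representation to the formal sum `1` recovers each
coefficient up to a nonzero polynomial factor. -/
lemma coeff_eq_zero (hv : v ≠ 0) {s : Finset ℤ} {f : ℤ → K[X]}
    (h0 : ∑ i ∈ s, homGen v i * aeval (Th K v) (f i) = 0) {i : ℤ} (hi : i ∈ s) : f i = 0 := by
  choose c hc H using tvRep_homGen hv
  have h1 := congrFun (LinearMap.congr_fun (congrArg (tvRep v) h0) (Pi.single 0 1)) i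
  rw [map_sum, LinearMap.sum_apply, Finset.sum_apply, Finset.sum_eq_single i] at h1
  · rw [map_mul, Module.End.mul_apply, H, ← aeval_algHom_apply, tvRep_Th, aeval_opH] at h1
    simpa [hc i i] using h1
  · intro j _ hj
    rw [map_mul, Module.End.mul_apply, H, ← aeval_algHom_apply, tvRep_Th, aeval_opH,
      Pi.single_eq_of_ne (sub_ne_zero.mpr hj.symm), mul_zero, mul_zero]
  · exact fun h => absurd hi h

/-! ### Polynomials invariant under translation by `1` -/

lemma artinSchreier_comp (p : ℕ) [Fact p.Prime] [CharP K p] : (X ^ p - X : K[X]).comp (X + C 1) = X ^ p - X := by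
  simp only [sub_comp, pow_comp, X_comp, C_1]
  rw [add_pow_char, one_pow]
  ring

/-- A polynomial with `f(X + 1) = f(X)` is a polynomial in `X ^ p - X`: divide by `X ^ p - X`;
quotient and remainder are invariant by uniqueness, and an invariant polynomial of degree less
than `p` takes the same value at the `p` elements of the prime field, so is constant. -/
lemma mem_adjoin_of_invariant (p : ℕ) [Fact p.Prime] [CharP K p] (f : K[X])
    (hf : f.comp (X + C 1) = f) :
    f ∈ Algebra.adjoin K {(X ^ p - X : K[X])} := by
  have hp : 1 < p := (Fact.out : p.Prime).one_lt
  have hdeg : (X ^ p - X : K[X]).degree = p := by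
    rw [degree_sub_eq_left_of_degree_lt] <;> rw [degree_X_pow]
    rw [degree_X]
    exact_mod_cast hp
  have hmon : (X ^ p - X : K[X]).Monic :=
    monic_X_pow_sub (by rw [degree_X]; exact_mod_cast hp)
  induction hN : f.natDegree using Nat.strong_induction_on generalizing f with
  | _ N ih =>
    set P : K[X] := X ^ p - X with hP
    have hdecomp := modByMonic_add_div f P
    have hrdeg : (f %ₘ P).degree < P.degree := degree_modByMonic_lt f hmon
    have huniq := div_modByMonic_unique (f := f) (g := P) ((f /ₘ P).comp (X + C 1))
      ((f %ₘ P).comp (X + C 1)) hmon ⟨by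
        conv_rhs => rw [← hf, ← hdecomp]
        rw [add_comp, mul_comp, hP, artinSchreier_comp], by
        rwa [degree_comp (by rw [degree_X_add_C]; exact one_pos), degree_X_add_C, mul_one]⟩
    have hr : f %ₘ P = C ((f %ₘ P).eval 0) := by
      rw [← sub_eq_zero]
      have hval : ∀ m : ℕ, (f %ₘ P).eval (m : K) = (f %ₘ P).eval 0 := by
        intro m
        induction m with
        | zero => simp
        | succ m ihm =>
          rw [← ihm]
          conv_rhs => rw [huniq.2]
          simp
      refine eq_zero_of_degree_lt_of_eval_index_eq_zero (v := fun m : ℕ => (m : K))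
        (Finset.range p) ?_ ?_ ?_
      · simpa using CharP.natCast_injOn_Iio K p
      · rw [Finset.card_range, ← hdeg]
        refine (degree_sub_le _ _).trans_lt (max_lt hrdeg (degree_C_le.trans_lt ?_))
        rw [hdeg]
        exact_mod_cast hp.le
      · intro m _
        simp [hval]
    rw [← hdecomp, hr]
    refine add_mem (Subalgebra.algebraMap_mem _ _)
      (mul_mem (Algebra.subset_adjoin rfl) ?_)
    by_cases hq : f /ₘ P = 0
    · rw [hq]
      exact zero_mem _
    · refine ih _ ?_ (f /ₘ P) huniq.1.symm rfl
      have hPf : P.natDegree = p := natDegree_eq_of_degree_eq_some hdeg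
      have h1 := natDegree_divByMonic f hmon
      have h2 : ¬ f.degree < P.degree := fun h => hq ((divByMonic_eq_zero_iff hmon).2 h)
      rw [not_lt] at h2
      have h3 := natDegree_le_natDegree h2
      omega

/-! ### Central elements -/

variable (v)

lemma mem_center_of_commute {z : Tv K v} (ha : z * Ta K v = Ta K v * z)
    (hb : z * Tb K v = Tb K v * z) (hh : z * Th K v = Th K v * z) :
    z ∈ Subalgebra.center K (Tv K v) := by
  rw [Subalgebra.mem_center_iff]
  intro t
  obtain ⟨x, rfl⟩ := RingQuot.mkAlgHom_surjective K (TvRel K v) t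
  induction x using FreeAlgebra.induction with
  | grade0 r => rw [AlgHom.commutes, Algebra.commutes]
  | grade1 x =>
    fin_cases x
    · exact ha.symm
    · exact hb.symm
    · exact hh.symm
  | mul x y hx hy => rw [map_mul, mul_assoc, hy, ← mul_assoc, hx, mul_assoc]
  | add x y hx hy => rw [map_add, add_mul, mul_add, hx, hy]

lemma Ta_pow_mem_center (p : ℕ) [Fact p.Prime] [CharP K p] :
    Ta K v ^ p ∈ Subalgebra.center K (Tv K v) := by
  have hp0 : p ≠ 0 := (Fact.out : p.Prime).ne_zero
  refine mem_center_of_commute v (pow_mul_comm' _ _) ?_ ?_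
  · obtain ⟨q, rfl⟩ := Nat.exists_eq_succ_of_ne_zero hp0
    have hq : (q : K) = -1 := by
      have := CharP.cast_eq_zero K (q + 1)
      push_cast at this
      exact eq_neg_of_add_eq_zero_left this
    rw [pow_succ, mul_assoc, Ta_mul_Tb, ← pow_succ, pow_succ', ← mul_assoc, Tb_mul_Ta,
      aeval_mul_of_shift (shift_pow (Ta_shift v) q), hq, mul_one]
  · rw [shift_pow (Ta_shift v) p]
    simp

lemma Tb_pow_mem_center (p : ℕ) [Fact p.Prime] [CharP K p] :
    Tb K v ^ p ∈ Subalgebra.center K (Tv K v) := by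
  have hp0 : p ≠ 0 := (Fact.out : p.Prime).ne_zero
  refine mem_center_of_commute v ?_ (pow_mul_comm' _ _) ?_
  · obtain ⟨q, rfl⟩ := Nat.exists_eq_succ_of_ne_zero hp0
    have hq : (q : K) = -1 := by
      have := CharP.cast_eq_zero K (q + 1)
      push_cast at this
      exact eq_neg_of_add_eq_zero_left this
    rw [pow_succ, mul_assoc, Tb_mul_Ta, ← pow_succ, pow_succ', ← mul_assoc, Ta_mul_Tb,
      aeval_mul_of_shift (shift_pow (Tb_shift v) q), hq, comp_shift]
    simp
  · rw [shift_pow (Tb_shift v) p]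
    simp

lemma Th_pow_sub_mem_center (p : ℕ) [Fact p.Prime] [CharP K p] :
    Th K v ^ p - Th K v ∈ Subalgebra.center K (Tv K v) := by
  have e : Th K v ^ p - Th K v = aeval (Th K v) (X ^ p - X : K[X]) := by simp
  have e' : (X ^ p - X : K[X]).comp (X + C (-1)) = X ^ p - X := by
    conv_lhs => rw [← artinSchreier_comp p, comp_shift]
    simp
  rw [e]
  refine mem_center_of_commute v ?_ ?_ ?_
  · rw [aeval_mul_of_shift (Ta_shift v), artinSchreier_comp]
  · rw [aeval_mul_of_shift (Tb_shift v), e']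
  · simp [sub_mul, mul_sub, pow_mul_comm']

/-- The generators in degrees divisible by `p` are powers of `a ^ p` or `b ^ p`. -/
lemma homGen_mem_adjoin (p : ℕ) {i : ℤ} (hi : (p : ℤ) ∣ i) :
    homGen v i ∈ Algebra.adjoin K
      ({Ta K v ^ p, Tb K v ^ p, Th K v ^ p - Th K v} : Set (Tv K v)) := by
  cases i with
  | ofNat n =>
    obtain ⟨k, rfl⟩ : p ∣ n := Int.natCast_dvd_natCast.mp hi
    rw [homGen, pow_mul]
    exact pow_mem (Algebra.subset_adjoin (by simp)) k
  | negSucc n =>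
    obtain ⟨k, hk⟩ : p ∣ n + 1 := Int.natCast_dvd.mp hi
    rw [homGen, hk, pow_mul]
    exact pow_mem (Algebra.subset_adjoin (by simp)) k

lemma adjoin_le_center (p : ℕ) [Fact p.Prime] [CharP K p] :
    Algebra.adjoin K ({Ta K v ^ p, Tb K v ^ p, Th K v ^ p - Th K v} : Set (Tv K v)) ≤
      Subalgebra.center K (Tv K v) := by
  rw [Algebra.adjoin_le_iff]
  rintro x (rfl | rfl | rfl)
  · exact Ta_pow_mem_center v p
  · exact Tb_pow_mem_center v p
  · exact Th_pow_sub_mem_center v p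

variable {v}

/-- Commuting with `h` kills the coefficients of a central element in degrees prime to `p`. -/
lemma dvd_of_central (p : ℕ) [CharP K p] (hv : v ≠ 0) {f : ℤ →₀ K[X]}
    (hz : normalForm v f ∈ Subalgebra.center K (Tv K v)) {i : ℤ} (hi : i ∈ f.support) :
    (p : ℤ) ∣ i := by
  rw [Subalgebra.mem_center_iff] at hz
  have h0 : ∑ i ∈ f.support, homGen v i * aeval (Th K v) (C (i : K) * f i) = 0 := by
    rw [← sub_eq_zero.mpr (hz (Th K v)), normalForm_apply, Finset.mul_sum, Finset.sum_mul,
      ← Finset.sum_sub_distrib]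
    refine Finset.sum_congr rfl fun i _ => ?_
    have hc : aeval (Th K v) (f i) * Th K v = Th K v * aeval (Th K v) (f i) := by
      simpa using congrArg (aeval (Th K v)) (mul_comm (f i) X)
    rw [← mul_assoc, homGen_shift, mul_assoc, mul_assoc, hc, ← mul_sub, map_mul, aeval_C, add_mul,
      add_sub_cancel_left]
  have h1 := coeff_eq_zero hv h0 hi
  rw [mul_eq_zero, C_eq_zero] at h1
  exact (CharP.intCast_eq_zero_iff K p i).mp (h1.resolve_right (Finsupp.mem_support_iff.mp hi))

/-- Commuting with `a` makes the coefficients of a central element invariant under translation.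
With `z = ∑ i, homGen i * f i (h)`, each `homGen i` is itself central, so
`(a * z - z * a) * b = ∑ i, homGen i * (f i (h - 1) - f i (h)) * v (h - 1)`. -/
lemma invariant_of_central (p : ℕ) [Fact p.Prime] [CharP K p] (hv : v ≠ 0)
    {f : ℤ →₀ K[X]}
    (hz : normalForm v f ∈ Subalgebra.center K (Tv K v)) {i : ℤ} (hi : i ∈ f.support) :
    (f i).comp (X + C 1) = f i := by
  have hdvd := fun j (hj : j ∈ f.support) => dvd_of_central p hv hz hj
  rw [Subalgebra.mem_center_iff] at hz
  have h0 : ∑ i ∈ f.support, homGen v i * aeval (Th K v)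
      (((f i).comp (X + C (-1)) - f i) * v.comp (X + C (-1))) = 0 := by
    rw [← zero_mul (Tb K v), ← sub_eq_zero.mpr (hz (Ta K v)), normalForm_apply, Finset.mul_sum,
      Finset.sum_mul, ← Finset.sum_sub_distrib, Finset.sum_mul]
    refine Finset.sum_congr rfl fun j hj => ?_
    have hw := Subalgebra.mem_center_iff.mp
      (adjoin_le_center v p (homGen_mem_adjoin v p (hdvd j hj))) (Ta K v)
    have hs := aeval_mul_of_shift (Ta_shift v) ((f j).comp (X + C (-1)))
    rw [comp_shift, neg_add_cancel, C_0, add_zero, comp_X] at hs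
    rw [← mul_assoc, hw, mul_assoc, mul_assoc, ← mul_sub, ← hs, ← sub_mul, mul_assoc, mul_assoc,
      Ta_mul_Tb, map_mul, map_sub]
  have h1 := coeff_eq_zero hv h0 hi
  have h2 := (mul_eq_zero.mp h1).resolve_right (comp_shift_ne_zero hv _)
  conv_lhs => rw [← sub_eq_zero.mp h2, comp_shift]
  simp

end Proof

/-!
STATEMENT 4: The centre of `T(v)` is exactly the `K`-subalgebra of `T(v)` generated by
`a^p`, `b^p` and `h^p − h`.
-/

theorem statement_4 (K : Type) [Field K] (p n : ℕ) [Fact p.Prime] [CharP K p]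
    [IsAlgClosed K] (hn : 0 < n) (hpn : Nat.Coprime p n)
    (v : K[X]) (hmonic : v.Monic) (hdeg : v.natDegree = n)
    (hroots : ∀ x : K, v.IsRoot x → ∃ m : ℕ, (m : K) = x) :
    Subalgebra.center K (Tv K v) =
      Algebra.adjoin K
        ({Ta K v ^ p, Tb K v ^ p, Th K v ^ p - Th K v} : Set (Tv K v)) := by
  have hv : v ≠ 0 := hmonic.ne_zero
  refine le_antisymm (fun z hz => ?_) (adjoin_le_center v p)
  obtain ⟨f, rfl⟩ := normalForm_surjective v z
  rw [normalForm_apply]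
  refine sum_mem fun i hi => mul_mem (homGen_mem_adjoin v p (dvd_of_central p hv hz hi)) ?_
  have hmem : aeval (Th K v) (f i) ∈
      (Algebra.adjoin K {(X ^ p - X : K[X])}).map (aeval (Th K v)) :=
    ⟨f i, mem_adjoin_of_invariant p (f i) (invariant_of_central p hv hz hi), rfl⟩
  rw [AlgHom.map_adjoin, Set.image_singleton] at hmem
  refine Algebra.adjoin_mono ?_ hmem
  simp
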